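/- Assume N(f) ≠ {0}. Then sup_{P ∈ 𝒫(Z)} B(P,ℰ) = sup_{u ∈ N(f)\{0}} B̄(u). Moreover, if P ∈ 𝒫(Z) is a global maximizer of Q ↦ B(Q,ℰ) with B(P,ℰ) > 0, then u := P − Π_P belongs to N(f)\{0}, u is a global maximizer of B̄ over N(f)\{0}, and B̄(u) = B(P,ℰ). -/

import Mathlib

/-!
Write `H` for the separable convex function `Q ↦ ∑ z, β z (Q z)`. By convex duality the divergence
from `P` to the Bregman family equals the gap `H P - H (Π_P)`, where `Π_P` minimises `H` on the
slice of the simplex through `P` in the directions `N(f)`. Likewise `B_u` is the gap for the slices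
in the single direction `u`. Slices along a line of `N(f)` are contained in the slices along `N(f)`,
so the line gaps never exceed the full gap; and for `u = P - Π_P` the point `Π_P` already lies on
the line through `P` in direction `u`, so there the two gaps agree.
-/

open Set Matrix
open scoped Pointwise

section Convexity

theorem convexOn_of_convexOn_interior {D : Set ℝ} {b : ℝ → ℝ} (hD : Convex ℝ D)
    (hcont : ContinuousOn b D) (hconv : ConvexOn ℝ (interior D) b)
    (hdiff : ∀ x ∈ interior D, DifferentiableAt ℝ b x) : ConvexOn ℝ D b :=
  (hconv.monotoneOn_deriv hdiff).convexOn_of_deriv hD hcont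
    fun x hx => (hdiff x hx).differentiableWithinAt

theorem add_mul_sub_le_of_hasDerivAt {D : Set ℝ} {b : ℝ → ℝ} {b' p q : ℝ} (hb : ConvexOn ℝ D b)
    (hp : p ∈ D) (hq : q ∈ D) (hd : HasDerivAt b b' q) : b q + b' * (p - q) ≤ b p := by
  rcases lt_trichotomy p q with hlt | rfl | hlt
  · have hslope := hb.slope_le_of_hasDerivAt hp hq hlt hd
    rw [slope_def_field, div_le_iff₀ (sub_pos.2 hlt)] at hslope
    linarith
  · simp
  · have hslope := hb.le_slope_of_hasDerivAt hq hp hlt hd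
    rw [slope_def_field, le_div_iff₀ (sub_pos.2 hlt)] at hslope
    linarith

end Convexity

section LagrangeMultiplier

variable {V E : Type*} [AddCommGroup V] [Module ℝ V] [TopologicalSpace V]
  [AddCommGroup E] [Module ℝ E] [TopologicalSpace E] {C : Set V} {H : V → ℝ}

/-- The image under `A × id` of the epigraph of `H` over `C`. For compact `C` and continuous `H` it
is the epigraph of the value function `w ↦ min {H Q | Q ∈ C, A Q = w}`. -/
def imageEpigraph (H : V → ℝ) (C : Set V) (A : V →L[ℝ] E) : Set (E × ℝ) :=
  A.prodMap (.id ℝ ℝ) '' {p | p.1 ∈ C ∧ H p.1 ≤ p.2}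

theorem mem_imageEpigraph {A : V →L[ℝ] E} {x : E × ℝ} :
    x ∈ imageEpigraph H C A ↔ ∃ Q ∈ C, A Q = x.1 ∧ H Q ≤ x.2 := by
  constructor
  · rintro ⟨⟨Q, s⟩, ⟨hQ, hs⟩, rfl⟩
    exact ⟨Q, hQ, rfl, hs⟩
  · rintro ⟨Q, hQ, hA, hs⟩
    exact ⟨(Q, x.2), ⟨hQ, hs⟩, Prod.ext hA rfl⟩

theorem convex_imageEpigraph (hH : ConvexOn ℝ C H) (A : V →L[ℝ] E) :
    Convex ℝ (imageEpigraph H C A) :=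
  hH.convex_epigraph.linear_image (A.prodMap (.id ℝ ℝ)).toLinearMap

theorem imageEpigraph_eq_image_add (A : V →L[ℝ] E) :
    imageEpigraph H C A = (fun Q => (A Q, H Q)) '' C + {0} ×ˢ Ici (0 : ℝ) := by
  ext ⟨w, s⟩
  rw [mem_imageEpigraph, mem_add]
  constructor
  · rintro ⟨Q, hQ, rfl, hs⟩
    exact ⟨_, ⟨Q, hQ, rfl⟩, (0, s - H Q), ⟨rfl, sub_nonneg.2 hs⟩, by simp⟩
  · rintro ⟨_, ⟨Q, hQ, rfl⟩, ⟨_, t⟩, ⟨rfl, ht⟩, heq⟩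
    obtain ⟨hw, hs⟩ := Prod.mk.inj heq
    exact ⟨Q, hQ, by simpa using hw, hs ▸ le_add_of_nonneg_right ht⟩

theorem isClosed_imageEpigraph [IsTopologicalAddGroup E] [T1Space E] (hC : IsCompact C)
    (hH : ContinuousOn H C) (A : V →L[ℝ] E) : IsClosed (imageEpigraph H C A) := by
  rw [imageEpigraph_eq_image_add]
  exact (isClosed_singleton.prod isClosed_Ici).add_left_of_isCompact
    (hC.image_of_continuousOn (A.continuous.continuousOn.prodMk hH))

-- Separating `(A R, H R - ε)` from the image epigraph gives a functional `g`. Its coefficient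
-- `g (0, 1)` on the last axis is positive because `(A R, H R)` lies on the far side.
theorem exists_approx_lagrangeMultiplier [IsTopologicalAddGroup E] [ContinuousSMul ℝ E]
    [LocallyConvexSpace ℝ E] [T1Space E] (hC : IsCompact C) (hconv : ConvexOn ℝ C H)
    (hcont : ContinuousOn H C) (A : V →L[ℝ] E) {R : V} (hR : R ∈ C)
    (hmin : ∀ Q ∈ C, A Q = A R → H R ≤ H Q) {ε : ℝ} (hε : 0 < ε) :
    ∃ θ : E →L[ℝ] ℝ, ∀ Q ∈ C, H R - ε < H Q - θ (A Q - A R) := by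
  have hnotMem : (A R, H R - ε) ∉ imageEpigraph H C A := by
    rw [mem_imageEpigraph]
    rintro ⟨Q, hQ, hA, hle⟩
    exact (sub_lt_self _ hε).not_ge ((hmin Q hQ hA).trans hle)
  obtain ⟨g, c, hleft, hright⟩ := geometric_hahn_banach_point_closed
    (convex_imageEpigraph hconv A) (isClosed_imageEpigraph hC hcont A) hnotMem
  have hsplit (w : E) (s : ℝ) : g (w, s) = g (w, 0) + s * g (0, 1) := by
    rw [← smul_eq_mul, ← map_smul, ← map_add]
    simp
  have hsep (Q : V) (hQ : Q ∈ C) :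
      g (A R, 0) + (H R - ε) * g (0, 1) < g (A Q, 0) + H Q * g (0, 1) := by
    rw [← hsplit, ← hsplit]
    exact hleft.trans (hright _ (mem_imageEpigraph.2 ⟨Q, hQ, rfl, le_rfl⟩))
  have hpos : 0 < g (0, 1) :=
    (mul_pos_iff_of_pos_left hε).1 (by linarith [hsep R hR])
  let θ : E →L[ℝ] ℝ := -(g (0, 1))⁻¹ • g.comp (.inl ℝ E ℝ)
  have hθ (w : E) : θ w = -(g (w, 0) / g (0, 1)) := by
    simp [θ, div_eq_inv_mul]
  refine ⟨θ, fun Q hQ => ?_⟩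
  have hlt : H R - ε - H Q < (g (A Q, 0) - g (A R, 0)) / g (0, 1) := by
    rw [lt_div_iff₀ hpos]
    linarith [hsep Q hQ]
  rw [map_sub, hθ, hθ]
  linarith [sub_div (g (A Q, 0)) (g (A R, 0)) (g (0, 1))]

end LagrangeMultiplier

section MinProjection

variable {V : Type*} [AddCommGroup V] [Module ℝ V] {H : V → ℝ} {C : Set V}
  {U W : Submodule ℝ V} {π ρ : V → V} {P : V}

/-- The points of `C` on the affine subspace through `P` with direction `W`. -/
def affineSlice (C : Set V) (W : Submodule ℝ V) (P : V) : Set V :=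
  {Q ∈ C | Q - P ∈ W}

/-- `π` sends every point of `C` to a minimiser of `H` on the slice through that point in the
directions `W`. No condition is put on `π` outside `C`. -/
structure IsMinProjection (H : V → ℝ) (C : Set V) (W : Submodule ℝ V) (π : V → V) : Prop where
  mem : ∀ P ∈ C, π P ∈ affineSlice C W P
  isMinOn : ∀ P ∈ C, IsMinOn H (affineSlice C W P) (π P)

/-- A min-projection whose values are the only minimisers. -/
structure IsUniqueMinProjection (H : V → ℝ) (C : Set V) (W : Submodule ℝ V) (π : V → V) : Prop
    extends IsMinProjection H C W π where
  unique : ∀ P ∈ C, ∀ Q ∈ affineSlice C W P, H Q = H (π P) → Q = π P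

/-- The amount by which `H` drops from `P` to `π P`. For the min-projection `π = Π_u` it is the
paper's `B_u`. -/
def energyGap (H : V → ℝ) (π : V → V) (P : V) : ℝ :=
  H P - H (π P)

theorem affineSlice_mono (h : U ≤ W) : affineSlice C U P ⊆ affineSlice C W P :=
  fun _ hQ => ⟨hQ.1, h hQ.2⟩

theorem mem_affineSlice_span_singleton_iff {ι : Type*} {C : Set (ι → ℝ)} {u P Q : ι → ℝ} :
    Q ∈ affineSlice C (ℝ ∙ u) P ↔ Q ∈ C ∧ ∃ t : ℝ, ∀ i, Q i - P i = t * u i := by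
  simp [affineSlice, Submodule.mem_span_singleton, funext_iff, eq_comm]

namespace IsMinProjection

theorem energyGap_nonneg (hπ : IsMinProjection H C W π) (hP : P ∈ C) : 0 ≤ energyGap H π P :=
  sub_nonneg.2 (hπ.isMinOn P hP ⟨hP, by simp⟩)

theorem energyGap_le_energyGap (hρ : IsMinProjection H C U ρ) (hπ : IsMinProjection H C W π)
    (hUW : U ≤ W) (hP : P ∈ C) : energyGap H ρ P ≤ energyGap H π P :=
  sub_le_sub_left (hπ.isMinOn P hP (affineSlice_mono hUW (hρ.mem P hP))) _

theorem energyGap_le_of_mem_upperBounds {u : V} (hρ : IsMinProjection H C (ℝ ∙ u) ρ)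
    (hπ : IsMinProjection H C W π) (hu : u ∈ W) {c : ℝ}
    (hc : c ∈ upperBounds (energyGap H π '' C)) (hP : P ∈ C) : energyGap H ρ P ≤ c :=
  (hρ.energyGap_le_energyGap hπ ((Submodule.span_singleton_le_iff_mem _ _).2 hu) hP).trans
    (hc (mem_image_of_mem _ hP))

theorem bddAbove_energyGap (hπ : IsMinProjection H C W π) (hbelow : BddBelow (H '' C))
    (habove : BddAbove (H '' C)) : BddAbove (energyGap H π '' C) := by
  obtain ⟨m, hm⟩ := hbelow
  obtain ⟨M, hM⟩ := habove
  refine ⟨M - m, forall_mem_image.2 fun P hP => ?_⟩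
  exact sub_le_sub (hM (mem_image_of_mem H hP)) (hm (mem_image_of_mem H (hπ.mem P hP).1))

theorem sub_mem_diff_zero (hπ : IsMinProjection H C W π) (hP : P ∈ C)
    (hpos : 0 < energyGap H π P) : P - π P ∈ (W : Set V) \ {0} := by
  refine ⟨by simpa using W.neg_mem (hπ.mem P hP).2, fun hzero => hpos.ne' ?_⟩
  rw [energyGap, ← sub_eq_zero.1 hzero, sub_self]

end IsMinProjection

theorem IsUniqueMinProjection.apply_eq_of_span_sub (hπ : IsMinProjection H C W π) (hP : P ∈ C)
    (hρ : IsUniqueMinProjection H C (ℝ ∙ (P - π P)) ρ) : ρ P = π P := by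
  have hspan : ℝ ∙ (P - π P) ≤ W := by
    rw [Submodule.span_singleton_le_iff_mem, ← neg_sub]
    exact W.neg_mem (hπ.mem P hP).2
  have hmem : π P ∈ affineSlice C (ℝ ∙ (P - π P)) P :=
    ⟨(hπ.mem P hP).1, Submodule.mem_span_singleton.2 ⟨-1, by simp⟩⟩
  have hle : H (π P) ≤ H (ρ P) := hπ.isMinOn P hP (affineSlice_mono hspan (hρ.mem P hP))
  exact (hρ.unique P hP _ hmem (hle.antisymm (hρ.isMinOn P hP hmem))).symm

end MinProjection

section LineGap

variable {ι : Type*} [Fintype ι] {H : (ι → ℝ) → ℝ} {C : Set (ι → ℝ)} {W : Submodule ℝ (ι → ℝ)}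
  {π : (ι → ℝ) → ι → ℝ} {ρ : (ι → ℝ) → (ι → ℝ) → ι → ℝ} {u P : ι → ℝ}

/-- The points of `C` lying strictly ahead of their projection in the direction `u`: the paper's
`𝒫_u^+` when `C` is the simplex and `ρ = Π_u`. -/
def forwardSet (C : Set (ι → ℝ)) (ρ : (ι → ℝ) → ι → ℝ) (u : ι → ℝ) : Set (ι → ℝ) :=
  {Q ∈ C | 0 < (Q - ρ Q) ⬝ᵥ u}

/-- The supremum of the gap along lines of direction `u` over the closure of the forward set: the
paper's `B̄(u)`. -/
noncomputable def lineGapSup (H : (ι → ℝ) → ℝ) (C : Set (ι → ℝ)) (ρ : (ι → ℝ) → (ι → ℝ) → ι → ℝ)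
    (u : ι → ℝ) : ℝ :=
  sSup (energyGap H (ρ u) '' closure (forwardSet C (ρ u) u))

theorem closure_forwardSet_subset (hC : IsClosed C) (ρ : (ι → ℝ) → ι → ℝ) (u : ι → ℝ) :
    closure (forwardSet C ρ u) ⊆ C :=
  closure_minimal (sep_subset _ _) hC

theorem lineGapSup_nonneg (hC : IsClosed C) (hρ : IsMinProjection H C W (ρ u)) :
    0 ≤ lineGapSup H C ρ u :=
  Real.sSup_nonneg <| forall_mem_image.2 fun _ hQ =>
    hρ.energyGap_nonneg (closure_forwardSet_subset hC _ _ hQ)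

theorem lineGapSup_le (hC : IsClosed C) (hne : C.Nonempty) (hπ : IsMinProjection H C W π)
    (hρ : IsMinProjection H C (ℝ ∙ u) (ρ u)) (hu : u ∈ W) {c : ℝ}
    (hc : c ∈ upperBounds (energyGap H π '' C)) : lineGapSup H C ρ u ≤ c := by
  obtain ⟨P, hP⟩ := hne
  have hc_nonneg : 0 ≤ c := (hπ.energyGap_nonneg hP).trans (hc (mem_image_of_mem _ hP))
  exact Real.sSup_le (forall_mem_image.2 fun Q hQ =>
    hρ.energyGap_le_of_mem_upperBounds hπ hu hc (closure_forwardSet_subset hC _ _ hQ)) hc_nonneg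

theorem energyGap_le_lineGapSup (hC : IsClosed C) (hπ : IsMinProjection H C W π)
    (hρ : ∀ u ∈ W, u ≠ 0 → IsUniqueMinProjection H C (ℝ ∙ u) (ρ u))
    (hbdd : BddAbove (energyGap H π '' C)) (hP : P ∈ C) (hpos : 0 < energyGap H π P) :
    energyGap H π P ≤ lineGapSup H C ρ (P - π P) := by
  obtain ⟨hmem, hne⟩ := hπ.sub_mem_diff_zero hP hpos
  have hline := hρ _ hmem hne
  have heq : ρ (P - π P) P = π P := hline.apply_eq_of_span_sub hπ hP
  have hforward : P ∈ forwardSet C (ρ (P - π P)) (P - π P) := by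
    refine ⟨hP, ?_⟩
    rw [heq]
    exact dotProduct_star_self_pos_iff.2 hne
  calc energyGap H π P = energyGap H (ρ (P - π P)) P := by rw [energyGap, energyGap, heq]
    _ ≤ lineGapSup H C ρ (P - π P) := by
      obtain ⟨c, hc⟩ := hbdd
      refine le_csSup ⟨c, forall_mem_image.2 fun Q hQ => ?_⟩
        (mem_image_of_mem _ (subset_closure hforward))
      exact hline.energyGap_le_of_mem_upperBounds hπ hmem hc (closure_forwardSet_subset hC _ _ hQ)

theorem upperBounds_lineGapSup_eq (hC : IsClosed C) (hne : C.Nonempty) (hW : W ≠ ⊥)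
    (hπ : IsMinProjection H C W π)
    (hρ : ∀ u ∈ W, u ≠ 0 → IsUniqueMinProjection H C (ℝ ∙ u) (ρ u))
    (hbdd : BddAbove (energyGap H π '' C)) :
    upperBounds (lineGapSup H C ρ '' (W \ {0})) = upperBounds (energyGap H π '' C) := by
  refine Subset.antisymm (fun c hc => forall_mem_image.2 fun P hP => ?_)
    fun c hc => forall_mem_image.2 fun u hu =>
      lineGapSup_le hC hne hπ (hρ u hu.1 hu.2).toIsMinProjection hu.1 hc
  rcases (hπ.energyGap_nonneg hP).eq_or_lt with hzero | hpos
  · obtain ⟨u, hu, hu0⟩ := W.exists_mem_ne_zero_of_ne_bot hW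
    rw [← hzero]
    exact (lineGapSup_nonneg hC (hρ u hu hu0).toIsMinProjection).trans
      (hc (mem_image_of_mem _ ⟨hu, hu0⟩))
  · exact (energyGap_le_lineGapSup hC hπ hρ hbdd hP hpos).trans
      (hc (mem_image_of_mem _ (hπ.sub_mem_diff_zero hP hpos)))

theorem sSup_energyGap_eq_sSup_lineGapSup (hC : IsClosed C) (hne : C.Nonempty) (hW : W ≠ ⊥)
    (hπ : IsMinProjection H C W π)
    (hρ : ∀ u ∈ W, u ≠ 0 → IsUniqueMinProjection H C (ℝ ∙ u) (ρ u))
    (hbdd : BddAbove (energyGap H π '' C)) :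
    sSup (energyGap H π '' C) = sSup (lineGapSup H C ρ '' (W \ {0})) := by
  obtain ⟨u, hu, hu0⟩ := W.exists_mem_ne_zero_of_ne_bot hW
  have hlub : IsLUB (lineGapSup H C ρ '' (W \ {0})) (sSup (energyGap H π '' C)) := by
    rw [IsLUB, upperBounds_lineGapSup_eq hC hne hW hπ hρ hbdd]
    exact isLUB_csSup (hne.image _) hbdd
  exact (hlub.csSup_eq ⟨_, mem_image_of_mem _ ⟨hu, hu0⟩⟩).symm

theorem isMaxOn_lineGapSup_of_isMaxOn_energyGap (hC : IsClosed C) (hπ : IsMinProjection H C W π)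
    (hρ : ∀ u ∈ W, u ≠ 0 → IsUniqueMinProjection H C (ℝ ∙ u) (ρ u)) (hP : P ∈ C)
    (hmax : IsMaxOn (energyGap H π) C P) (hpos : 0 < energyGap H π P) :
    IsMaxOn (lineGapSup H C ρ) (W \ {0}) (P - π P) ∧
      lineGapSup H C ρ (P - π P) = energyGap H π P := by
  have hub : energyGap H π P ∈ upperBounds (energyGap H π '' C) := forall_mem_image.2 hmax
  have hle (u : ι → ℝ) (hu : u ∈ (W : Set (ι → ℝ)) \ {0}) :
      lineGapSup H C ρ u ≤ energyGap H π P :=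
    lineGapSup_le hC ⟨P, hP⟩ hπ (hρ u hu.1 hu.2).toIsMinProjection hu.1 hub
  have hge := energyGap_le_lineGapSup hC hπ hρ ⟨_, hub⟩ hP hpos
  exact ⟨fun u hu => (hle u hu).trans hge, (hle _ (hπ.sub_mem_diff_zero hP hpos)).antisymm hge⟩

end LineGap

section Bregman

variable {Z κ : Type*} [Fintype Z] {β β' : Z → ℝ → ℝ} {f : Matrix Z κ ℝ}
  {q : (κ → ℝ) → Z → ℝ} {π : (Z → ℝ) → Z → ℝ} {P Q R : Z → ℝ}

/-- The separable function `H(Q) = ∑ z, β z (Q z)`. -/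
def separableSum (β : Z → ℝ → ℝ) (Q : Z → ℝ) : ℝ :=
  ∑ z, β z (Q z)

/-- The Bregman divergence of `separableSum β`, where `β' z` stands for the derivative of `β z`. -/
def bregmanDiv (β β' : Z → ℝ → ℝ) (P Q : Z → ℝ) : ℝ :=
  ∑ z, (β z (P z) - β z (Q z) - β' z (Q z) * (P z - Q z))

/-- The divergence `B(P,ℰ)` from `P` to the family `ℰ` parametrised by `q`. -/
noncomputable def bregmanDivFamily (β β' : Z → ℝ → ℝ) (q : (κ → ℝ) → Z → ℝ) (P : Z → ℝ) : ℝ :=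
  ⨅ θ, bregmanDiv β β' P (q θ)

/-- The space `N(f)` of directions that preserve total mass and moments. The statistic is encoded as
a matrix whose rows are the vectors `f z`, so that `P ᵥ* f` is the moment vector `μ(P)` and
`(f *ᵥ θ) z` is `⟨θ, f z⟩`. -/
def momentKernel (f : Matrix Z κ ℝ) : Submodule ℝ (Z → ℝ) :=
  LinearMap.ker (Fintype.linearCombination ℝ fun _ : Z => (1 : ℝ)) ⊓ LinearMap.ker f.vecMulLinear

theorem mem_momentKernel {w : Z → ℝ} : w ∈ momentKernel f ↔ ∑ z, w z = 0 ∧ w ᵥ* f = 0 := by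
  simp [momentKernel, Fintype.linearCombination_apply]

theorem coe_momentKernel : (momentKernel f : Set (Z → ℝ)) =
    {w | ∑ z, w z = 0 ∧ ∀ i, ∑ z, w z * f z i = 0} := by
  ext w
  rw [SetLike.mem_coe, mem_momentKernel, funext_iff]
  rfl

theorem mem_affineSlice_stdSimplex_iff (hP : P ∈ stdSimplex ℝ Z) :
    Q ∈ affineSlice (stdSimplex ℝ Z) (momentKernel f) P ↔
      Q ∈ stdSimplex ℝ Z ∧ Q ᵥ* f = P ᵥ* f := by
  refine and_congr_right fun hQ => ?_
  simp [mem_momentKernel, hQ.2, hP.2, sub_vecMul, sub_eq_zero]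

theorem continuousOn_separableSum (hβ : ∀ z, ContinuousOn (β z) (Ici 0)) :
    ContinuousOn (separableSum β) (stdSimplex ℝ Z) :=
  continuousOn_finsetSum _ fun z _ =>
    (hβ z).comp (continuous_apply z).continuousOn fun _ hQ => hQ.1 z

theorem convexOn_separableSum (hβ : ∀ z, ConvexOn ℝ (Ici 0) (β z)) :
    ConvexOn ℝ (stdSimplex ℝ Z) (separableSum β) := by
  refine ⟨convex_stdSimplex ℝ Z, fun P hP Q hQ a b ha hb hab => ?_⟩
  simp only [separableSum, Finset.smul_sum, ← Finset.sum_add_distrib]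
  exact Finset.sum_le_sum fun z _ => (hβ z).2 (hP.1 z) (hQ.1 z) ha hb hab

theorem bregmanDiv_nonneg (hβ : ∀ z, ConvexOn ℝ (Ici 0) (β z))
    (hβd : ∀ z x, 0 < x → HasDerivAt (β z) (β' z x) x) (hP : ∀ z, 0 ≤ P z) (hQ : ∀ z, 0 < Q z) :
    0 ≤ bregmanDiv β β' P Q :=
  Finset.sum_nonneg fun z _ => by
    linarith [add_mul_sub_le_of_hasDerivAt (hβ z) (hP z) (hQ z).le (hβd z _ (hQ z))]

variable [Fintype κ]

theorem bregmanDiv_eq_sub_dotProduct {θ : κ → ℝ} {r : ℝ} (hgrad : ∀ z, β' z (Q z) = (f *ᵥ θ) z - r)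
    (hsum : ∑ z, P z = ∑ z, Q z) :
    bregmanDiv β β' P Q =
      separableSum β P - separableSum β Q - (P ᵥ* f - Q ᵥ* f) ⬝ᵥ θ := by
  have hlinear : ∑ z, β' z (Q z) * (P z - Q z) = (P ᵥ* f - Q ᵥ* f) ⬝ᵥ θ :=
    calc ∑ z, β' z (Q z) * (P z - Q z)
        = ∑ z, ((P - Q) z * (f *ᵥ θ) z - r * (P z - Q z)) :=
          Finset.sum_congr rfl fun z _ => by rw [hgrad, Pi.sub_apply]; ring
      _ = (P - Q) ⬝ᵥ (f *ᵥ θ) := by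
          rw [Finset.sum_sub_distrib, ← Finset.mul_sum, Finset.sum_sub_distrib, hsum, sub_self,
            mul_zero, sub_zero, dotProduct]
      _ = (P ᵥ* f - Q ᵥ* f) ⬝ᵥ θ := by rw [dotProduct_mulVec, sub_vecMul]
  simp only [bregmanDiv, separableSum, Finset.sum_sub_distrib, hlinear]

/-- `q θ` is the positive probability vector whose `β'`-coordinates are `⟨θ, f z⟩` up to an additive
normalisation constant (the paper's `Λ(θ)`). -/
structure IsBregmanFamily (β' : Z → ℝ → ℝ) (f : Matrix Z κ ℝ) (q : (κ → ℝ) → Z → ℝ) : Prop where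
  mem_stdSimplex : ∀ θ, q θ ∈ stdSimplex ℝ Z
  pos : ∀ θ z, 0 < q θ z
  exists_eq_sub : ∀ θ, ∃ r, ∀ z, β' z (q θ z) = (f *ᵥ θ) z - r

theorem isBregmanFamily_of_rightInverse {e : Z → ℝ → ℝ} {Λ : (κ → ℝ) → ℝ}
    (he_pos : ∀ z r, 0 < e z r) (he_right : ∀ z, Function.RightInverse (e z) (β' z))
    (hsum : ∀ θ, ∑ z, e z (θ ⬝ᵥ f z - Λ θ) = 1) :
    IsBregmanFamily β' f fun θ z => e z (θ ⬝ᵥ f z - Λ θ) where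
  mem_stdSimplex θ := ⟨fun z => (he_pos z _).le, hsum θ⟩
  pos θ z := he_pos z _
  exists_eq_sub θ := ⟨Λ θ, fun z => by rw [he_right z, dotProduct_comm]; rfl⟩

namespace IsBregmanFamily

theorem bregmanDiv_eq_sub_dotProduct (hq : IsBregmanFamily β' f q) (hP : P ∈ stdSimplex ℝ Z)
    (θ : κ → ℝ) : bregmanDiv β β' P (q θ) =
      separableSum β P - separableSum β (q θ) - (P ᵥ* f - q θ ᵥ* f) ⬝ᵥ θ := by
  obtain ⟨r, hr⟩ := hq.exists_eq_sub θ
  exact _root_.bregmanDiv_eq_sub_dotProduct hr (hP.2.trans (hq.mem_stdSimplex θ).2.symm)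

theorem bregmanDiv_sub_bregmanDiv (hq : IsBregmanFamily β' f q) (hP : P ∈ stdSimplex ℝ Z)
    (hR : R ∈ stdSimplex ℝ Z) (hPR : R ᵥ* f = P ᵥ* f) (θ : κ → ℝ) :
    bregmanDiv β β' P (q θ) - bregmanDiv β β' R (q θ) = separableSum β P - separableSum β R := by
  rw [hq.bregmanDiv_eq_sub_dotProduct hP, hq.bregmanDiv_eq_sub_dotProduct hR, hPR]
  ring

theorem energyGap_le_bregmanDiv (hq : IsBregmanFamily β' f q)
    (hβ : ∀ z, ConvexOn ℝ (Ici 0) (β z)) (hβd : ∀ z x, 0 < x → HasDerivAt (β z) (β' z x) x)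
    (hπ : IsMinProjection (separableSum β) (stdSimplex ℝ Z) (momentKernel f) π)
    (hP : P ∈ stdSimplex ℝ Z) (θ : κ → ℝ) :
    energyGap (separableSum β) π P ≤ bregmanDiv β β' P (q θ) := by
  obtain ⟨hπP, hmoment⟩ := (mem_affineSlice_stdSimplex_iff hP).1 (hπ.mem P hP)
  calc energyGap (separableSum β) π P
      = bregmanDiv β β' P (q θ) - bregmanDiv β β' (π P) (q θ) :=
        (hq.bregmanDiv_sub_bregmanDiv hP hπP hmoment θ).symm
    _ ≤ bregmanDiv β β' P (q θ) :=
        sub_le_self _ (bregmanDiv_nonneg hβ hβd hπP.1 (hq.pos θ))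

-- The point `q θ` minimises the Lagrangian `Q ↦ H Q - ⟨θ, μ(Q) - μ(P)⟩`, so an approximate
-- multiplier `θ` for the constrained problem defining `π P` yields an approximately closest point
-- of the family.
theorem exists_bregmanDiv_lt (hq : IsBregmanFamily β' f q)
    (hβc : ∀ z, ContinuousOn (β z) (Ici 0)) (hβ : ∀ z, ConvexOn ℝ (Ici 0) (β z))
    (hπ : IsMinProjection (separableSum β) (stdSimplex ℝ Z) (momentKernel f) π)
    (hP : P ∈ stdSimplex ℝ Z) {c : ℝ} (hc : energyGap (separableSum β) π P < c) :
    ∃ θ, bregmanDiv β β' P (q θ) < c := by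
  classical
  obtain ⟨hπP, hmoment⟩ := (mem_affineSlice_stdSimplex_iff hP).1 (hπ.mem P hP)
  have hmin (Q : Z → ℝ) (hQ : Q ∈ stdSimplex ℝ Z) (hQP : Q ᵥ* f = π P ᵥ* f) :
      separableSum β (π P) ≤ separableSum β Q :=
    hπ.isMinOn P hP ((mem_affineSlice_stdSimplex_iff hP).2 ⟨hQ, hQP.trans hmoment⟩)
  obtain ⟨g, hg⟩ := exists_approx_lagrangeMultiplier (isCompact_stdSimplex ℝ Z)
    (convexOn_separableSum hβ) (continuousOn_separableSum hβc)
    f.vecMulLinear.toContinuousLinearMap hπP hmin (sub_pos.2 hc)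
  obtain ⟨θ, hθ⟩ := (dotProductEquiv ℝ κ).surjective g.toLinearMap
  have hgθ (w : κ → ℝ) : g w = w ⬝ᵥ θ :=
    (LinearMap.congr_fun hθ w).symm.trans (dotProduct_comm θ w)
  refine ⟨θ, ?_⟩
  have hLagrange : separableSum β (π P) - (c - energyGap (separableSum β) π P) <
      separableSum β (q θ) - (q θ ᵥ* f - P ᵥ* f) ⬝ᵥ θ := by
    rw [← hmoment, ← hgθ]
    exact hg _ (hq.mem_stdSimplex θ)
  rw [hq.bregmanDiv_eq_sub_dotProduct hP, ← neg_sub (q θ ᵥ* f), neg_dotProduct]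
  unfold energyGap at hLagrange
  linarith

theorem bregmanDivFamily_eq_energyGap (hq : IsBregmanFamily β' f q)
    (hβc : ∀ z, ContinuousOn (β z) (Ici 0)) (hβ : ∀ z, ConvexOn ℝ (Ici 0) (β z))
    (hβd : ∀ z x, 0 < x → HasDerivAt (β z) (β' z x) x)
    (hπ : IsMinProjection (separableSum β) (stdSimplex ℝ Z) (momentKernel f) π) :
    EqOn (bregmanDivFamily β β' q) (energyGap (separableSum β) π) (stdSimplex ℝ Z) :=
  fun _ hP => ciInf_eq_of_forall_ge_of_forall_gt_exists_lt
    (hq.energyGap_le_bregmanDiv hβ hβd hπ hP) fun _ => hq.exists_bregmanDiv_lt hβc hβ hπ hP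

end IsBregmanFamily

theorem stmt_16_general (hβc : ∀ z, ContinuousOn (β z) (Ici 0))
    (hβ : ∀ z, ConvexOn ℝ (Ici 0) (β z)) (hβd : ∀ z x, 0 < x → HasDerivAt (β z) (β' z x) x)
    (hq : IsBregmanFamily β' f q)
    (hπ : IsMinProjection (separableSum β) (stdSimplex ℝ Z) (momentKernel f) π)
    {ρ : (Z → ℝ) → (Z → ℝ) → Z → ℝ}
    (hρ : ∀ u ∈ momentKernel f, u ≠ 0 →
      IsUniqueMinProjection (separableSum β) (stdSimplex ℝ Z) (ℝ ∙ u) (ρ u))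
    (hN : momentKernel f ≠ ⊥) :
    sSup (bregmanDivFamily β β' q '' stdSimplex ℝ Z) =
        sSup (lineGapSup (separableSum β) (stdSimplex ℝ Z) ρ '' (momentKernel f \ {0})) ∧
      ∀ P ∈ stdSimplex ℝ Z, IsMaxOn (bregmanDivFamily β β' q) (stdSimplex ℝ Z) P →
        0 < bregmanDivFamily β β' q P →
        P - π P ∈ (momentKernel f : Set (Z → ℝ)) \ {0} ∧
        IsMaxOn (lineGapSup (separableSum β) (stdSimplex ℝ Z) ρ) (momentKernel f \ {0}) (P - π P) ∧
        lineGapSup (separableSum β) (stdSimplex ℝ Z) ρ (P - π P) = bregmanDivFamily β β' q P := by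
  have hgap := hq.bregmanDivFamily_eq_energyGap hβc hβ hβd hπ
  have hclosed := isClosed_stdSimplex ℝ Z
  have hcompact := isCompact_stdSimplex ℝ Z
  have hcont := continuousOn_separableSum hβc
  refine ⟨?_, fun P hP hmax hpos => ?_⟩
  · rw [hgap.image_eq]
    exact sSup_energyGap_eq_sSup_lineGapSup hclosed ⟨q 0, hq.mem_stdSimplex 0⟩ hN hπ hρ
      (hπ.bddAbove_energyGap (hcompact.bddBelow_image hcont) (hcompact.bddAbove_image hcont))
  · have hmax' := hmax.congr (hgap.eventuallyEq_of_mem (Filter.mem_principal_self _)) (hgap hP)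
    rw [hgap hP] at hpos ⊢
    exact ⟨hπ.sub_mem_diff_zero hP hpos,
      isMaxOn_lineGapSup_of_isMaxOn_energyGap hclosed hπ hρ hP hmax' hpos⟩

end Bregman

theorem stmt_16 {Z : Type} [Fintype Z] [Nonempty Z] {d : ℕ}
    (β β' : Z → ℝ → ℝ)
    (hβc : ∀ z, ContinuousOn (β z) (Set.Ici 0))
    (hβsc : ∀ z, StrictConvexOn ℝ (Set.Ioi 0) (β z))
    (hβd : ∀ z x, 0 < x → HasDerivAt (β z) (β' z x) x)
    (hβ'bot : ∀ z, Filter.Tendsto (β' z) (nhdsWithin 0 (Set.Ioi 0)) Filter.atBot)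
    (hβ'top : ∀ z, Filter.Tendsto (β' z) Filter.atTop Filter.atTop)
    (e : Z → ℝ → ℝ)
    (he_pos : ∀ z r, 0 < e z r)
    (he_left : ∀ z r, β' z (e z r) = r)
    (he_right : ∀ z x, 0 < x → e z (β' z x) = x)
    (f : Z → Fin d → ℝ)
    (prob : Set (Z → ℝ))
    (hprob : prob = {P : Z → ℝ | (∀ z, 0 ≤ P z) ∧ (∑ z, P z) = 1})
    (μ : (Z → ℝ) → Fin d → ℝ)
    (hμ : ∀ P i, μ P i = ∑ z, P z * f z i)
    (H : (Z → ℝ) → ℝ)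
    (hH : ∀ Q, H Q = ∑ z, β z (Q z))
    (Λ : (Fin d → ℝ) → ℝ)
    (hΛ : ∀ θ, (∑ z, e z ((∑ i, θ i * f z i) - Λ θ)) = 1)
    (Pθ : (Fin d → ℝ) → Z → ℝ)
    (hPθ : ∀ θ z, Pθ θ z = e z ((∑ i, θ i * f z i) - Λ θ))
    (Bdiv : (Z → ℝ) → (Z → ℝ) → ℝ)
    (hBdiv : ∀ P Q, Bdiv P Q = ∑ z, (β z (P z) - β z (Q z) - β' z (Q z) * (P z - Q z)))
    (BE : (Z → ℝ) → ℝ)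
    (hBE : ∀ P, BE P = ⨅ θ, Bdiv P (Pθ θ))
    (Pr : (Z → ℝ) → Z → ℝ)
    (hPr : ∀ P ∈ prob, Pr P ∈ prob ∧ μ (Pr P) = μ P ∧
      (∀ Q ∈ prob, μ Q = μ P → H (Pr P) ≤ H Q) ∧
      (∀ Q ∈ prob, μ Q = μ P → H Q = H (Pr P) → Q = Pr P))
    (Pru : (Z → ℝ) → (Z → ℝ) → Z → ℝ)
    (hPru : ∀ u : Z → ℝ, (∑ z, u z) = 0 → u ≠ 0 → ∀ Q ∈ prob,
      Pru u Q ∈ prob ∧ (∃ t : ℝ, ∀ z, Pru u Q z - Q z = t * u z) ∧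
      (∀ R ∈ prob, (∃ t : ℝ, ∀ z, R z - Q z = t * u z) → H (Pru u Q) ≤ H R) ∧
      (∀ R ∈ prob, (∃ t : ℝ, ∀ z, R z - Q z = t * u z) → H R = H (Pru u Q) → R = Pru u Q))
    (Pplus : (Z → ℝ) → Set (Z → ℝ))
    (hPplus : ∀ u, Pplus u = {Q | Q ∈ prob ∧ 0 < ∑ z, (Q z - Pru u Q z) * u z})
    (Bu : (Z → ℝ) → (Z → ℝ) → ℝ)
    (hBu : ∀ u Q, Bu u Q = H Q - H (Pru u Q))
    (Bbar : (Z → ℝ) → ℝ)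
    (hBbar : ∀ u, Bbar u = sSup (Bu u '' closure (Pplus u)))
    (N : Set (Z → ℝ))
    (hNdef : N = {w : Z → ℝ | (∑ z, w z) = 0 ∧ ∀ i, (∑ z, w z * f z i) = 0})
    (hNne : ∃ u ∈ N, u ≠ 0) :
    sSup (BE '' prob) = sSup (Bbar '' (N \ {0})) ∧
    ∀ P ∈ prob, (∀ Q ∈ prob, BE Q ≤ BE P) → 0 < BE P →
      (P - Pr P) ∈ N \ {0} ∧
      (∀ v ∈ N \ {0}, Bbar v ≤ Bbar (P - Pr P)) ∧
      Bbar (P - Pr P) = BE P := by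
  obtain rfl : prob = stdSimplex ℝ Z := hprob
  obtain rfl : μ = fun P => P ᵥ* f := funext₂ hμ
  obtain rfl : H = separableSum β := funext hH
  obtain rfl : Pθ = fun θ z => e z (θ ⬝ᵥ f z - Λ θ) := funext₂ hPθ
  obtain rfl : Bdiv = bregmanDiv β β' := funext₂ hBdiv
  obtain rfl : BE = bregmanDivFamily β β' fun θ z => e z (θ ⬝ᵥ f z - Λ θ) := funext hBE
  obtain rfl : Pplus = fun u => forwardSet (stdSimplex ℝ Z) (Pru u) u := funext hPplus
  obtain rfl : Bu = fun u => energyGap (separableSum β) (Pru u) := funext₂ hBu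
  obtain rfl : Bbar = lineGapSup (separableSum β) (stdSimplex ℝ Z) Pru := funext hBbar
  obtain rfl : N = momentKernel f := hNdef.trans coe_momentKernel.symm
  have hconvex (z : Z) : ConvexOn ℝ (Ici 0) (β z) :=
    convexOn_of_convexOn_interior (convex_Ici 0) (hβc z) (by simpa using (hβsc z).convexOn)
      (by simpa using fun x hx => (hβd z x hx).differentiableAt)
  have hproj : IsMinProjection (separableSum β) (stdSimplex ℝ Z) (momentKernel f) Pr :=
    ⟨fun P hP => (mem_affineSlice_stdSimplex_iff hP).2 ⟨(hPr P hP).1, (hPr P hP).2.1⟩,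
      fun P hP Q hQ => ((mem_affineSlice_stdSimplex_iff hP).1 hQ).elim ((hPr P hP).2.2.1 Q)⟩
  have hline (u : Z → ℝ) (hu : u ∈ momentKernel f) (hu0 : u ≠ 0) :
      IsUniqueMinProjection (separableSum β) (stdSimplex ℝ Z) (ℝ ∙ u) (Pru u) := by
    have h := hPru u (mem_momentKernel.1 hu).1 hu0
    exact ⟨⟨fun P hP => mem_affineSlice_span_singleton_iff.2 ⟨(h P hP).1, (h P hP).2.1⟩,
      fun P hP Q hQ => (mem_affineSlice_span_singleton_iff.1 hQ).elim ((h P hP).2.2.1 Q)⟩,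
      fun P hP Q hQ => (mem_affineSlice_span_singleton_iff.1 hQ).elim ((h P hP).2.2.2 Q)⟩
  exact stmt_16_general hβc hconvex hβd (isBregmanFamily_of_rightInverse he_pos he_left hΛ) hproj
    hline ((Submodule.ne_bot_iff _).2 hNne)
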